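/- The monoid T is finite and its cardinality equals Σ_{k=0}^{⌊n/2⌋} (n!)² / (2^{2k}·(k!)²·(n−2k)!) (each quotient being an exact natural-number division). (This is the cardinality form of the theorem that T is isomorphic to the Brauer monoid 𝔅_n via σ_i ↦ s_i, θ_i ↦ π_i.) -/

import Mathlib

/-!
The Brauer monoid presentation from Kudryavtseva–Mazorchuk,
"On presentations of Brauer-type monoids", Section 3.

Generators: `Sum.inl i` represents `σ_{i+1}` and `Sum.inr i` represents `θ_{i+1}`
for `i : Fin (n-1)` (so the paper's indices `1, …, n-1` correspond to `i.val + 1`).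
-/

/-- Generator type: `Sum.inl i` is `σ_{i+1}`, `Sum.inr i` is `θ_{i+1}`. -/
abbrev BrauerGen (n : ℕ) := Fin (n - 1) ⊕ Fin (n - 1)

/-- The word `σ_{i+1}` in the free monoid. -/
def fσ {n : ℕ} (i : Fin (n - 1)) : FreeMonoid (BrauerGen n) := FreeMonoid.of (Sum.inl i)

/-- The word `θ_{i+1}` in the free monoid. -/
def fθ {n : ℕ} (i : Fin (n - 1)) : FreeMonoid (BrauerGen n) := FreeMonoid.of (Sum.inr i)

/-- The defining relations of the presentation of the Brauer monoid `𝔅_n`. -/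
inductive BrauerRel (n : ℕ) : FreeMonoid (BrauerGen n) → FreeMonoid (BrauerGen n) → Prop
  | sigma_sq (i) : BrauerRel n (fσ i * fσ i) 1
  | sigma_comm (i j) (h : 1 < Nat.dist i.1 j.1) : BrauerRel n (fσ i * fσ j) (fσ j * fσ i)
  | braid (i j) (h : Nat.dist i.1 j.1 = 1) :
      BrauerRel n (fσ i * fσ j * fσ i) (fσ j * fσ i * fσ j)
  | theta_idem (i) : BrauerRel n (fθ i * fθ i) (fθ i)
  | theta_comm (i j) (h : 1 < Nat.dist i.1 j.1) : BrauerRel n (fθ i * fθ j) (fθ j * fθ i)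
  | theta_theta_theta (i j) (h : Nat.dist i.1 j.1 = 1) :
      BrauerRel n (fθ i * fθ j * fθ i) (fθ i)
  | theta_sigma (i) : BrauerRel n (fθ i * fσ i) (fθ i)
  | sigma_theta (i) : BrauerRel n (fσ i * fθ i) (fθ i)
  | theta_sigma_comm (i j) (h : 1 < Nat.dist i.1 j.1) :
      BrauerRel n (fθ i * fσ j) (fσ j * fθ i)
  | sigma_theta_theta (i j) (h : Nat.dist i.1 j.1 = 1) :
      BrauerRel n (fσ i * fθ j * fθ i) (fσ j * fθ i)
  | theta_theta_sigma (i j) (h : Nat.dist i.1 j.1 = 1) :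
      BrauerRel n (fθ i * fθ j * fσ i) (fθ i * fσ j)

/-- The monoid `T` given by the presentation above. -/
abbrev BrauerMonoid (n : ℕ) := PresentedMonoid (BrauerRel n)

/-- The generator `σ_{i+1}` of `T`. -/
def σB {n : ℕ} (i : Fin (n - 1)) : BrauerMonoid n := PresentedMonoid.of (BrauerRel n) (Sum.inl i)

/-- The generator `θ_{i+1}` of `T`. -/
def θB {n : ℕ} (i : Fin (n - 1)) : BrauerMonoid n := PresentedMonoid.of (BrauerRel n) (Sum.inr i)

/-- The point `i` of `{1, …, n}` (0-based: `i.val`). -/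
def lo {n : ℕ} (i : Fin (n - 1)) : Fin n := ⟨i.1, by have := i.2; omega⟩

/-- The point `i + 1` of `{1, …, n}` (0-based: `i.val + 1`). -/
def hi {n : ℕ} (i : Fin (n - 1)) : Fin n := ⟨i.1 + 1, by have := i.2; omega⟩

/-- The adjacent transposition `s_{i+1} = (i+1, i+2)` of the symmetric group on `{1, …, n}`. -/
def sPerm {n : ℕ} (i : Fin (n - 1)) : Equiv.Perm (Fin n) := Equiv.swap (lo i) (hi i)

/-!
In the Brauer monoid, conjugating the `π_i` by permutations gives an idempotent `arc a b` for every
pair of points, and every diagram has the form `u * arc a₁ b₁ * ⋯ * arc a_k b_k` with disjoint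
pairs `{a_l, b_l}`, that is, with an involution `α`; the permutation `u` is unique up to the
permutations that preserve the set of arcs of `α` and fix the other points. There are
`n! / (2 ^ k * k! * (n - 2 * k)!)` involutions with `k` arcs and `n! / (2 ^ k * k!)` cosets for
each, which gives the `k`-th summand.

The rules that bring a product of permutations and arcs to this form hold in `T`. The `σ_i`
generate an image of the symmetric group, by the Coxeter presentation. The permutations fixing
`1` and `2` are generated by `s_3, …, s_{n-1}`, which commute with `θ_1`, and all `θ_i` are
conjugate to `θ_1`, so the conjugates of the `θ_i` are indexed by pairs of points; each rule then
needs to be checked on a single configuration of points, where it is a defining relation. The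
normal forms are distinct in `T`, since they are distinguished by the action on the perfect
matchings of two copies of `{1, …, n}`.
-/

open Equiv Function

/-! ### The Coxeter presentation of the symmetric group -/

section Coxeter

variable {C : Type*} [Monoid C]

/-- The Coxeter relations of type `A_m` for a family `τ 0, …, τ (m - 1)` in a monoid. -/
structure IsCoxeterFamily {m : ℕ} (τ : Fin m → C) : Prop where
  mul_self : ∀ i, τ i * τ i = 1
  commute : ∀ i j : Fin m, i.1 + 1 < j.1 → Commute (τ i) (τ j)
  braid : ∀ i j : Fin m, i.1 + 1 = j.1 → τ i * τ j * τ i = τ j * τ i * τ j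

theorem IsCoxeterFamily.prodMk {D : Type*} [Monoid D] {m : ℕ} {τ : Fin m → C} {ρ : Fin m → D}
    (hτ : IsCoxeterFamily τ) (hρ : IsCoxeterFamily ρ) : IsCoxeterFamily fun i => (τ i, ρ i) where
  mul_self i := Prod.ext (hτ.mul_self i) (hρ.mul_self i)
  commute i j h := (hτ.commute i j h).prod (hρ.commute i j h)
  braid i j h := Prod.ext (hτ.braid i j h) (hρ.braid i j h)

/-- The product `σ i * σ (i + 1) * ⋯ * σ (k - 1)`, equal to `1` if `k ≤ i`. -/
def ascProd (σ : ℕ → C) (i k : ℕ) : C := ((List.Ico i k).map σ).prod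

theorem ascProd_self (σ : ℕ → C) (k : ℕ) : ascProd σ k k = 1 := by simp [ascProd]

theorem ascProd_eq_mul (σ : ℕ → C) {i k : ℕ} (h : i < k) :
    ascProd σ i k = σ i * ascProd σ (i + 1) k := by
  simp [ascProd, List.Ico.eq_cons h]

theorem ascProd_mul_ascProd (σ : ℕ → C) {i j k : ℕ} (hij : i ≤ j) (hjk : j ≤ k) :
    ascProd σ i j * ascProd σ j k = ascProd σ i k := by
  simp only [ascProd, ← List.Ico.append_consecutive hij hjk, List.map_append, List.prod_append]

theorem commute_ascProd {σ : ℕ → C} {x : C} {i k : ℕ}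
    (h : ∀ j, i ≤ j → j < k → Commute x (σ j)) : Commute x (ascProd σ i k) := by
  refine Commute.list_prod_right _ _ fun y hy => ?_
  obtain ⟨j, hj, rfl⟩ := List.mem_map.1 hy
  exact h j (List.Ico.mem.1 hj).1 (List.Ico.mem.1 hj).2

namespace IsCoxeterFamily

variable {σ : ℕ → C} {m : ℕ}

theorem semiconjBy_ascProd (hσ : IsCoxeterFamily fun i : Fin m => σ i) {i j k : ℕ}
    (hji : j ≤ i) (hik : i + 2 ≤ k) (hkm : k ≤ m) :
    SemiconjBy (ascProd σ j k) (σ i) (σ (i + 1)) := by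
  have comm_left : Commute (σ (i + 1)) (ascProd σ j i) := commute_ascProd fun l _ hl =>
    (hσ.commute ⟨l, by omega⟩ ⟨i + 1, by omega⟩ (by simpa using hl)).symm
  have comm_right : Commute (σ i) (ascProd σ (i + 2) k) := commute_ascProd fun l hl _ =>
    hσ.commute ⟨i, by omega⟩ ⟨l, by omega⟩ (Nat.lt_of_succ_le hl)
  have braid : σ i * σ (i + 1) * σ i = σ (i + 1) * σ i * σ (i + 1) :=
    hσ.braid ⟨i, by omega⟩ ⟨i + 1, by omega⟩ rfl
  have split : ascProd σ j k = ascProd σ j i * (σ i * σ (i + 1)) * ascProd σ (i + 2) k := by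
    rw [← ascProd_mul_ascProd σ hji (by omega : i ≤ k), ascProd_eq_mul σ (by omega : i < k),
      ascProd_eq_mul σ (by omega : i + 1 < k)]
    simp only [mul_assoc]
  refine Eq.symm ?_
  calc σ (i + 1) * ascProd σ j k
      = ascProd σ j i * (σ (i + 1) * σ i * σ (i + 1)) * ascProd σ (i + 2) k := by
        rw [split]; simp only [← mul_assoc, comm_left.eq]
    _ = ascProd σ j i * (σ i * σ (i + 1)) * (σ i * ascProd σ (i + 2) k) := by
        rw [← braid]; simp only [mul_assoc]
    _ = ascProd σ j k * σ i := by rw [comm_right.eq, split, mul_assoc _ _ (σ i)]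

end IsCoxeterFamily

open scoped Pointwise in
/-- The normal forms `c_m * ⋯ * c_1` where `c_k = σ j * ⋯ * σ (k - 1)` for some `j ≤ k`: the
products `σ j * ⋯ * σ (m - 1)` represent the cosets of the subgroup generated by
`σ 0, …, σ (m - 2)`. -/
def coxeterWords [DecidableEq C] (σ : ℕ → C) : ℕ → Finset C
  | 0 => 1
  | m + 1 => (Finset.range (m + 2)).image (ascProd σ · (m + 1)) * coxeterWords σ m

section CoxeterWords

variable [DecidableEq C] {σ : ℕ → C} {m : ℕ}

theorem mem_coxeterWords_succ {x : C} :
    x ∈ coxeterWords σ (m + 1) ↔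
      ∃ j ≤ m + 1, ∃ y ∈ coxeterWords σ m, ascProd σ j (m + 1) * y = x := by
  simp [coxeterWords, Finset.mem_mul, Nat.lt_succ_iff]

theorem card_coxeterWords_le (σ : ℕ → C) (m : ℕ) :
    (coxeterWords σ m).card ≤ (m + 1).factorial := by
  induction m with
  | zero => simp [coxeterWords]
  | succ m ih =>
    rw [Nat.factorial_succ, coxeterWords]
    exact Finset.card_mul_le.trans
      (Nat.mul_le_mul (Finset.card_image_le.trans (Finset.card_range _).le) ih)

theorem one_mem_coxeterWords (σ : ℕ → C) (m : ℕ) : 1 ∈ coxeterWords σ m := by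
  induction m with
  | zero => simp [coxeterWords]
  | succ m ih => exact mem_coxeterWords_succ.2 ⟨m + 1, le_rfl, 1, ih, by simp [ascProd_self]⟩

theorem IsCoxeterFamily.mul_mem_coxeterWords (hσ : IsCoxeterFamily fun i : Fin m => σ i) {i k : ℕ}
    (hik : i < k) (hkm : k ≤ m) {x : C} (hx : x ∈ coxeterWords σ k) :
    σ i * x ∈ coxeterWords σ k := by
  induction k generalizing i x with
  | zero => omega
  | succ k ih =>
    obtain ⟨j, hj, y, hy, rfl⟩ := mem_coxeterWords_succ.1 hx
    rw [mem_coxeterWords_succ, ← mul_assoc]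
    obtain hij | rfl | rfl | hji : i + 1 < j ∨ i + 1 = j ∨ i = j ∨ j < i := by omega
    · have hcomm : Commute (σ i) (ascProd σ j (k + 1)) := commute_ascProd fun l hl _ =>
        hσ.commute ⟨i, by omega⟩ ⟨l, by omega⟩ (hij.trans_le hl)
      exact ⟨j, hj, σ i * y, ih (by omega) (by omega) hy, by rw [hcomm.eq, mul_assoc]⟩
    · exact ⟨i, by omega, y, hy, by rw [ascProd_eq_mul σ hik]⟩
    · have hsq : σ i * σ i = 1 := hσ.mul_self ⟨i, by omega⟩
      exact ⟨i + 1, by omega, y, hy, by rw [ascProd_eq_mul σ hik, ← mul_assoc, hsq, one_mul]⟩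
    · obtain ⟨i, rfl⟩ : ∃ l, i = l + 1 := ⟨i - 1, by omega⟩
      exact ⟨j, hj, σ i * y, ih (by omega) (by omega) hy, by
        rw [← (hσ.semiconjBy_ascProd (by omega) (by omega) hkm).eq, mul_assoc]⟩

end CoxeterWords

theorem IsCoxeterFamily.finite_closure_and_card_le {m : ℕ} {τ : Fin m → C}
    (hτ : IsCoxeterFamily τ) : Finite (Submonoid.closure (Set.range τ)) ∧
      Nat.card (Submonoid.closure (Set.range τ)) ≤ (m + 1).factorial := by
  classical
  let σ : ℕ → C := extend Fin.val τ 1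
  have hσ (i : Fin m) : σ i = τ i := Fin.val_injective.extend_apply τ 1 i
  have hcox : IsCoxeterFamily fun i : Fin m => σ i := by simpa only [hσ] using hτ
  have hsub : (Submonoid.closure (Set.range τ) : Set C) ⊆ coxeterWords σ m := by
    intro x hx
    induction hx using Submonoid.closure_induction_left with
    | one => exact one_mem_coxeterWords σ m
    | mul_left x hx y _ ih =>
      obtain ⟨i, rfl⟩ := hx
      exact hσ i ▸ hcox.mul_mem_coxeterWords i.2 le_rfl ih
  refine ⟨(coxeterWords σ m).finite_toSet.subset hsub, ?_⟩
  calc Nat.card (Submonoid.closure (Set.range τ))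
      ≤ (coxeterWords σ m : Set C).ncard :=
        Set.ncard_le_ncard hsub (coxeterWords σ m).finite_toSet
    _ ≤ (m + 1).factorial := (Set.ncard_coe_finset _).trans_le (card_coxeterWords_le σ m)

end Coxeter

section AdjacentTranspositions

variable {n : ℕ}

theorem lo_ne_hi (i : Fin (n - 1)) : lo i ≠ hi i := by simp [lo, hi]

theorem hi_eq_lo {i j : Fin (n - 1)} (h : i.1 + 1 = j.1) : hi i = lo j := Fin.ext h

theorem lo_ne_hi_of_le {i j : Fin (n - 1)} (h : i.1 ≤ j.1) : lo i ≠ hi j :=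
  Fin.ne_of_val_ne (Nat.lt_succ_of_le h).ne

theorem ends_ne_of_one_lt_dist {i j : Fin (n - 1)} (h : 1 < Nat.dist i.1 j.1) :
    lo i ≠ lo j ∧ lo i ≠ hi j ∧ hi i ≠ lo j ∧ hi i ≠ hi j := by
  simp only [lo, hi, ne_eq, Fin.mk.injEq]
  rw [Nat.dist] at h
  omega

theorem swap_commute_swap {X : Type*} [DecidableEq X] {a b c d : X} (hac : a ≠ c) (had : a ≠ d)
    (hbc : b ≠ c) (hbd : b ≠ d) : Commute (swap a b) (swap c d) := by
  rw [Commute, SemiconjBy, mul_swap_eq_swap_mul, swap_apply_of_ne_of_ne hac.symm hbc.symm,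
    swap_apply_of_ne_of_ne had.symm hbd.symm]

theorem swap_mul_swap_mul_swap_comm {X : Type*} [DecidableEq X] {a b c : X} (hab : a ≠ b)
    (hbc : b ≠ c) (hac : a ≠ c) :
    swap a b * swap b c * swap a b = swap b c * swap a b * swap b c := by
  rw [swap_mul_swap_mul_swap hab hac, swap_comm a b, swap_comm b c,
    swap_mul_swap_mul_swap hbc.symm hac.symm, swap_comm]

theorem isCoxeterFamily_sPerm : IsCoxeterFamily (sPerm (n := n)) where
  mul_self i := swap_mul_self _ _
  commute i j h := by
    obtain ⟨h₁, h₂, h₃, h₄⟩ : lo i ≠ lo j ∧ lo i ≠ hi j ∧ hi i ≠ lo j ∧ hi i ≠ hi j :=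
      ends_ne_of_one_lt_dist (by rw [Nat.dist_eq_sub_of_le] <;> omega)
    exact swap_commute_swap h₁ h₂ h₃ h₄
  braid i j h := by
    simp only [sPerm, ← hi_eq_lo h]
    exact swap_mul_swap_mul_swap_comm (lo_ne_hi i) (hi_eq_lo h ▸ lo_ne_hi j)
      (lo_ne_hi_of_le (by omega))

theorem closure_range_sPerm : Submonoid.closure (Set.range (sPerm (n := n))) = ⊤ := by
  cases n with
  | zero => exact Subsingleton.elim _ _
  | succ m => exact Perm.mclosure_swap_castSucc_succ m

/- The submonoid of `T × Perm (Fin n)` generated by the pairs `(τ i, sPerm i)` has at most `n!`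
elements and surjects onto `Perm (Fin n)`, so it is the graph of a homomorphism. -/
theorem IsCoxeterFamily.exists_perm_hom {T : Type*} [Monoid T] {τ : Fin (n - 1) → T}
    (hτ : IsCoxeterFamily τ) : ∃ ι : Perm (Fin n) →* T, ∀ i, ι (sPerm i) = τ i := by
  let pair (i : Fin (n - 1)) : T × Perm (Fin n) := (τ i, sPerm i)
  let graph := Submonoid.closure (Set.range pair)
  have pair_mem (i : Fin (n - 1)) : pair i ∈ graph := Submonoid.subset_closure ⟨i, rfl⟩
  obtain ⟨_, hcard⟩ : Finite graph ∧ Nat.card graph ≤ (n - 1 + 1).factorial :=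
    (hτ.prodMk isCoxeterFamily_sPerm).finite_closure_and_card_le
  let proj : graph →* Perm (Fin n) := (MonoidHom.snd T _).comp graph.subtype
  have hsurj : Surjective proj := by
    rw [← MonoidHom.mrange_eq_top, eq_top_iff, ← closure_range_sPerm, Submonoid.closure_le]
    rintro _ ⟨i, rfl⟩
    exact ⟨⟨pair i, pair_mem i⟩, rfl⟩
  have hle : Nat.card graph ≤ Nat.card (Perm (Fin n)) := by
    rw [Nat.card_perm, Nat.card_fin]
    cases n <;> exact hcard
  have hbij : Bijective proj := (Nat.bijective_iff_surjective_and_card proj).2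
    ⟨hsurj, hle.antisymm (Nat.card_le_card_of_surjective proj hsurj)⟩
  let e := MulEquiv.ofBijective proj hbij
  refine ⟨((MonoidHom.fst T _).comp graph.subtype).comp e.symm.toMonoidHom, fun i => ?_⟩
  have hsymm : e.symm (sPerm i) = ⟨pair i, pair_mem i⟩ := e.symm_apply_eq.2 rfl
  exact congrArg (fun g : graph => g.1.1) hsymm

end AdjacentTranspositions

/-! ### Involutions and the stabilizers of their arcs -/

section Involutions

variable {X : Type*} {α : Perm X}

/-- The permutations that permute the arcs `{x, α x}` of an involution `α` (possibly flipping
them) and fix every fixed point of `α`. -/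
def arcStabilizer (α : Perm X) : Subgroup (Perm X) :=
  Subgroup.centralizer {α} ⊓ fixingSubgroup (Perm X) {x | α x = x}

theorem mem_arcStabilizer {w : Perm X} :
    w ∈ arcStabilizer α ↔ (∀ x, w (α x) = α (w x)) ∧ ∀ x, α x = x → w x = x := by
  simp [arcStabilizer, Subgroup.mem_centralizer_singleton_iff, mem_fixingSubgroup_iff,
    Equiv.ext_iff]

variable [DecidableEq X]

theorem involutive_swap_mul (hα : Involutive α) (a : X) : Involutive (swap a (α a) * α) := by
  intro x
  simp only [Perm.mul_apply, swap_apply_def]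
  grind [hα a, hα x]

theorem swap_mem_arcStabilizer (hα : Involutive α) (a : X) :
    swap a (α a) ∈ arcStabilizer α := by
  rw [mem_arcStabilizer]
  simp only [swap_apply_def]
  grind [hα a, Involutive]

theorem swap_mul_swap_mem_arcStabilizer (hα : Involutive α) {a c : X} (ha : α a ≠ a)
    (hc : α c ≠ c) : swap a c * swap (α a) (α c) ∈ arcStabilizer α := by
  rw [mem_arcStabilizer]
  simp only [Perm.mul_apply, swap_apply_def]
  grind [hα a, hα c, Involutive]

theorem card_support_mul_lt [Fintype X] {g w : Perm X} {a : X} (hwa : w a ≠ a) (hga : g (w a) = a)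
    (hg : ∀ x, w x = x → g x = x) : (g * w).support.card < w.support.card := by
  refine Finset.card_lt_card ((Finset.ssubset_iff_of_subset fun x hx => ?_).2 ⟨a, ?_, ?_⟩)
  · rw [Perm.mem_support] at hx ⊢
    exact fun hwx => hx (by rw [Perm.mul_apply, hwx, hg x hwx])
  · exact Perm.mem_support.2 hwa
  · rwa [Perm.notMem_support]

variable [Finite X]

theorem involutive_induction {motive : Perm X → Prop} (one : motive 1)
    (swap_mul : ∀ (α : Perm X) (a b : X), Involutive α → a ≠ b → α a = a → α b = b →
      motive α → motive (swap a b * α)) (hα : Involutive α) : motive α := by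
  cases nonempty_fintype X
  induction hk : α.support.card using Nat.strong_induction_on generalizing α with
  | _ k ih =>
    by_cases hone : α = 1
    · exact hone ▸ one
    obtain ⟨a, ha⟩ : ∃ a, α a ≠ a := by
      contrapose! hone
      exact Equiv.ext hone
    have hβ := involutive_swap_mul hα a
    have motive_β := ih _ (hk ▸ Perm.card_support_swap_mul ha) hβ rfl
    have := swap_mul _ a (α a) hβ ha.symm (by simp) (by simp [hα a]) motive_β
    rwa [swap_mul_self_mul] at this

theorem arcStabilizer_le (hα : Involutive α) {K : Subgroup (Perm X)}
    (flip : ∀ a, swap a (α a) ∈ K)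
    (exchange : ∀ a c, α a ≠ a → α c ≠ c → swap a c * swap (α a) (α c) ∈ K) :
    arcStabilizer α ≤ K := by
  cases nonempty_fintype X
  intro w hw
  induction hk : w.support.card using Nat.strong_induction_on generalizing w with
  | _ k ih =>
    by_cases hone : w = 1
    · exact hone ▸ K.one_mem
    obtain ⟨a, ha⟩ : ∃ a, w a ≠ a := by
      contrapose! hone
      exact Equiv.ext hone
    obtain ⟨hcomm, hfix⟩ := mem_arcStabilizer.1 hw
    have hαa : α a ≠ a := fun h => ha (hfix a h)
    have hαwa : α (w a) ≠ w a := by rwa [← hcomm, w.injective.ne_iff]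
    suffices ∃ g ∈ K, g ∈ arcStabilizer α ∧ g (w a) = a ∧ ∀ x, w x = x → g x = x by
      obtain ⟨g, hgK, hgα, hga, hg⟩ := this
      exact (K.mul_mem_cancel_left hgK).1
        (ih _ (hk ▸ card_support_mul_lt ha hga hg) (mul_mem hgα hw) rfl)
    by_cases hwa : w a = α a
    · refine ⟨_, flip a, swap_mem_arcStabilizer hα a, by simp [hwa], fun x hx => ?_⟩
      simp only [swap_apply_def]
      grind [hcomm a]
    · refine ⟨_, exchange a (w a) hαa hαwa,
        swap_mul_swap_mem_arcStabilizer hα hαa hαwa, ?_, fun x hx => ?_⟩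
      · rw [Perm.mul_apply, swap_apply_of_ne_of_ne hwa hαwa.symm, swap_apply_right]
      · have := hcomm a
        simp only [Perm.mul_apply, swap_apply_def]
        grind [w.injective.eq_iff]

end Involutions

section Counting

variable {X : Type*} [DecidableEq X]

theorem arcStabilizer_eq_map (α : Perm X) :
    arcStabilizer α = (Subgroup.centralizer
      {α.subtypePerm (p := fun x => α x ≠ x) (by simp)}).map Perm.ofSubtype := by
  ext w
  simp only [mem_arcStabilizer, Subgroup.mem_map, Subgroup.mem_centralizer_singleton_iff]
  constructor
  · rintro ⟨hcomm, hfix⟩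
    have hw (x : X) : α (w x) ≠ w x ↔ α x ≠ x := by rw [← hcomm, w.injective.ne_iff]
    exact ⟨w.subtypePerm hw, Equiv.ext fun x => Subtype.ext (hcomm x),
      Perm.ofSubtype_subtypePerm hw fun x hx hαx => hx (hfix x hαx)⟩
  · rintro ⟨g, hg, rfl⟩
    have hcomm := congrArg Perm.ofSubtype hg
    rw [map_mul, map_mul, Perm.ofSubtype_subtypePerm _ fun _ => id] at hcomm
    exact ⟨DFunLike.congr_fun hcomm, fun x hx =>
      Perm.ofSubtype_apply_of_not_mem g (not_not.2 hx)⟩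

variable [Fintype X] {α : Perm X}

theorem involutive_iff_cycleType :
    Involutive α ↔ α.cycleType = Multiset.replicate α.cycleType.card 2 := by
  have hpow : Involutive α ↔ α ^ 2 = 1 := by rw [sq, Equiv.ext_iff]; rfl
  rw [hpow, Perm.pow_prime_eq_one_iff, Multiset.eq_replicate_card]

theorem card_cycleType_mul_two_le (hα : Involutive α) :
    α.cycleType.card * 2 ≤ Fintype.card X := by
  have hsum := α.sum_cycleType
  rw [involutive_iff_cycleType.1 hα, Multiset.sum_replicate, smul_eq_mul] at hsum
  exact hsum ▸ Finset.card_le_univ _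

theorem prod_factorial_count_replicate (k m : ℕ) :
    ∏ j ∈ (Multiset.replicate k m).toFinset, ((Multiset.replicate k m).count j).factorial =
      k.factorial := by
  obtain rfl | hk := eq_or_ne k 0
  · simp
  · rw [Multiset.toFinset_replicate, if_neg hk, Finset.prod_singleton,
      Multiset.count_replicate_self]

theorem card_arcStabilizer {k : ℕ} (hα : α.cycleType = Multiset.replicate k 2) :
    Nat.card (arcStabilizer α) = 2 ^ k * k.factorial := by
  set β := α.subtypePerm (p := fun x => α x ≠ x) (by simp) with hβ
  have hβα : Perm.ofSubtype β = α := Perm.ofSubtype_subtypePerm _ fun _ => id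
  have hcycle : β.cycleType = Multiset.replicate k 2 := by
    rw [← Perm.cycleType_ofSubtype, hβα, hα]
  have hcard : Fintype.card {x // α x ≠ x} = 2 * k := by
    have hsum := α.sum_cycleType
    rw [hα, Multiset.sum_replicate, smul_eq_mul] at hsum
    rw [Fintype.card_subtype, mul_comm, hsum]
    rfl
  rw [arcStabilizer_eq_map, Subgroup.card_map_of_injective Perm.ofSubtype_injective,
    Perm.nat_card_centralizer, ← hβ, hcycle, prod_factorial_count_replicate, hcard,
    Multiset.sum_replicate, Multiset.prod_replicate, smul_eq_mul, mul_comm k 2, Nat.sub_self,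
    Nat.factorial_zero, one_mul]

theorem card_quotient_arcStabilizer_mul (hα : Involutive α) :
    Nat.card (Perm X ⧸ arcStabilizer α) *
      (2 ^ α.cycleType.card * α.cycleType.card.factorial) = (Fintype.card X).factorial := by
  rw [← card_arcStabilizer (involutive_iff_cycleType.1 hα),
    ← Subgroup.card_eq_card_quotient_mul_card_subgroup, Nat.card_eq_fintype_card,
    Fintype.card_perm]

theorem involutive_and_card_cycleType_eq_iff {k : ℕ} :
    Involutive α ∧ α.cycleType.card = k ↔ α.cycleType = Multiset.replicate k 2 := by
  rw [involutive_iff_cycleType]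
  constructor
  · rintro ⟨h, rfl⟩
    exact h
  · intro h
    have hk : α.cycleType.card = k := by rw [h, Multiset.card_replicate]
    exact ⟨hk.symm ▸ h, hk⟩

theorem card_cycleType_eq_replicate_two_mul {k : ℕ} (hk : 2 * k ≤ Fintype.card X) :
    ({α : Perm X | α.cycleType = Multiset.replicate k 2} : Finset _).card *
      ((Fintype.card X - 2 * k).factorial * 2 ^ k * k.factorial) = (Fintype.card X).factorial := by
  have hcard := Perm.card_of_cycleType_mul_eq (α := X) (Multiset.replicate k 2)
  rwa [if_pos, prod_factorial_count_replicate, Multiset.sum_replicate, Multiset.prod_replicate,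
    smul_eq_mul, mul_comm k 2] at hcard
  refine ⟨by rwa [Multiset.sum_replicate, smul_eq_mul, mul_comm], fun a ha => ?_⟩
  rw [Multiset.eq_of_mem_replicate ha]

theorem sum_card_quotient_arcStabilizer {k : ℕ} (hk : 2 * k ≤ Fintype.card X) :
    ∑ α : Perm X with α.cycleType = Multiset.replicate k 2, Nat.card (Perm X ⧸ arcStabilizer α) =
      (Fintype.card X).factorial ^ 2 /
        (2 ^ (2 * k) * k.factorial ^ 2 * (Fintype.card X - 2 * k).factorial) := by
  have hquot (α : Perm X) (hα : α ∈ {α : Perm X | α.cycleType = Multiset.replicate k 2}) :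
      Nat.card (Perm X ⧸ arcStabilizer α) * (2 ^ k * k.factorial) = (Fintype.card X).factorial := by
    obtain ⟨hinv, rfl⟩ := involutive_and_card_cycleType_eq_iff.2 hα
    exact card_quotient_arcStabilizer_mul hinv
  refine Nat.eq_div_of_mul_eq_left (by positivity) ?_
  rw [Finset.sum_mul]
  calc ∑ α : Perm X with α.cycleType = Multiset.replicate k 2,
        Nat.card (Perm X ⧸ arcStabilizer α) *
          (2 ^ (2 * k) * k.factorial ^ 2 * (Fintype.card X - 2 * k).factorial)
      = ∑ α : Perm X with α.cycleType = Multiset.replicate k 2, (Fintype.card X).factorial *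
          ((Fintype.card X - 2 * k).factorial * 2 ^ k * k.factorial) :=
        Finset.sum_congr rfl fun α hα => by
          rw [← hquot α (Finset.mem_filter.1 hα).2]
          ring
    _ = (Fintype.card X).factorial ^ 2 := by
        rw [Finset.sum_const, smul_eq_mul, mul_left_comm, card_cycleType_eq_replicate_two_mul hk,
          sq]

end Counting

theorem card_sigma_quotient_arcStabilizer {X : Type*} [Fintype X] :
    Nat.card (Σ α : {α : Perm X // Involutive α}, Perm X ⧸ arcStabilizer α.1) =
      ∑ k ∈ Finset.range (Fintype.card X / 2 + 1), (Fintype.card X).factorial ^ 2 /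
        (2 ^ (2 * k) * k.factorial ^ 2 * (Fintype.card X - 2 * k).factorial) := by
  classical
  rw [Nat.card_sigma, ← Finset.sum_subtype {α : Perm X | Involutive α} (by simp)
      fun α => Nat.card (Perm X ⧸ arcStabilizer α),
    ← Finset.sum_fiberwise_of_maps_to (t := Finset.range (Fintype.card X / 2 + 1))
      (g := fun α : Perm X => α.cycleType.card)]
  · refine Finset.sum_congr rfl fun k hk => ?_
    rw [Finset.mem_range] at hk
    rw [← sum_card_quotient_arcStabilizer (by omega), Finset.filter_filter]
    simp only [involutive_and_card_cycleType_eq_iff]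
  · intro α hα
    have := card_cycleType_mul_two_le (Finset.mem_filter.1 hα).2
    rw [Finset.mem_range]
    omega

/-! ### Brauer systems -/

/-- A family of elements `perm w` and `arc a b` of a monoid that multiply like diagrams of the
Brauer monoid: `perm w` stands for the diagram of the permutation `w`, and `arc a b` for the diagram
that joins `a` to `b` and `a'` to `b'` and is the identity elsewhere. The convention `arc a a = 1`
removes most side conditions from the axioms. -/
structure BrauerSystem (X : Type*) [DecidableEq X] (T : Type*) [Monoid T] where
  perm : Perm X →* T
  arc : X → X → T
  arc_self : ∀ a, arc a a = 1
  arc_comm : ∀ a b, arc a b = arc b a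
  semiconjBy_arc : ∀ w a b, SemiconjBy (perm w) (arc a b) (arc (w a) (w b))
  commute_arc : ∀ a b c d, a ≠ c → a ≠ d → b ≠ c → b ≠ d → Commute (arc a b) (arc c d)
  arc_mul_arc : ∀ a b c, b ≠ c → arc a b * arc b c = perm (swap a c) * arc b c

namespace BrauerSystem

variable {X : Type*} [DecidableEq X] {T : Type*} [Monoid T] (S : BrauerSystem X T)

theorem arc_mul_self (a b : X) : S.arc a b * S.arc a b = S.arc a b := by
  obtain rfl | hab := eq_or_ne a b
  · rw [S.arc_self, one_mul]
  · simpa [S.arc_comm b a, ← Perm.one_def] using S.arc_mul_arc a b a hab.symm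

theorem swap_mul_arc (a b : X) : S.perm (swap a b) * S.arc a b = S.arc a b := by
  obtain rfl | hab := eq_or_ne a b
  · rw [swap_self, ← Perm.one_def, map_one, one_mul]
  · rw [← S.arc_mul_arc a a b hab, S.arc_self, one_mul]

theorem pairwise_commute_arc {α : Perm X} (hα : Involutive α) (s : Set X) :
    s.Pairwise (Commute on fun x => S.arc x (α x)) := by
  intro x _ y _ hxy
  change Commute (S.arc x (α x)) (S.arc y (α y))
  obtain rfl | hαxy := eq_or_ne (α x) y
  · rw [hα x, S.arc_comm (α x)]
  · exact S.commute_arc _ _ _ _ hxy (fun h => hαxy (by rw [h, hα y])) hαxy (α.injective.ne hxy)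

variable [Fintype X]

/-- The idempotent with one arc `{x, α x}`, on either side, for each `2`-cycle of `α`. -/
def arcProd {α : Perm X} (hα : Involutive α) : T :=
  Finset.univ.noncommProd (fun x => S.arc x (α x)) (S.pairwise_commute_arc hα _)

theorem arcProd_one (h : Involutive (1 : Perm X)) : S.arcProd h = 1 :=
  Finset.noncommProd_eq_pow_card _ _ _ 1 (fun x _ => S.arc_self x) |>.trans (one_pow _)

theorem arc_mul_arcProd {α : Perm X} (hα : Involutive α) (a : X) :
    S.arc a (α a) * S.arcProd hα = S.arcProd hα := by
  rw [arcProd, ← Finset.mul_noncommProd_erase Finset.univ (Finset.mem_univ a), ← mul_assoc,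
    S.arc_mul_self]

theorem arcProd_eq_mul_mul {α : Perm X} (hα : Involutive α) {a b : X} (hab : a ≠ b) :
    S.arcProd hα = S.arc a (α a) * (S.arc b (α b) *
      ((Finset.univ.erase a).erase b).noncommProd (fun x => S.arc x (α x))
        (S.pairwise_commute_arc hα _)) := by
  rw [Finset.mul_noncommProd_erase (Finset.univ.erase a)
      (Finset.mem_erase.2 ⟨hab.symm, Finset.mem_univ b⟩) (fun x => S.arc x (α x))
      (S.pairwise_commute_arc hα _), Finset.mul_noncommProd_erase Finset.univ (Finset.mem_univ a)
      (fun x => S.arc x (α x)) (S.pairwise_commute_arc hα _), arcProd]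

theorem arcProd_swap_mul {α : Perm X} (hα : Involutive α) {a b : X} (ha : α a = a) (hb : α b = b)
    (hab : a ≠ b) (hβ : Involutive (swap a b * α)) :
    S.arcProd hβ = S.arc a b * S.arcProd hα := by
  have hβa : (swap a b * α) a = b := by rw [Perm.mul_apply, ha, swap_apply_left]
  have hβb : (swap a b * α) b = a := by rw [Perm.mul_apply, hb, swap_apply_right]
  have hβx (x : X) (hxa : x ≠ a) (hxb : x ≠ b) : (swap a b * α) x = α x := by
    rw [Perm.mul_apply, swap_apply_of_ne_of_ne (fun h => hxa (α.injective (h.trans ha.symm)))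
      (fun h => hxb (α.injective (h.trans hb.symm)))]
  rw [S.arcProd_eq_mul_mul hβ hab, S.arcProd_eq_mul_mul hα hab, hβa, hβb, ha, hb, S.arc_self,
    S.arc_self, one_mul, one_mul, S.arc_comm b a, ← mul_assoc, S.arc_mul_self]
  congr 1
  refine Finset.noncommProd_congr rfl (fun x hx => ?_) _
  simp only [Finset.mem_erase] at hx
  rw [hβx x hx.2.1 hx.1]

theorem swap_mul_arcProd {α : Perm X} (hα : Involutive α) (a : X) :
    S.perm (swap a (α a)) * S.arcProd hα = S.arcProd hα := by
  rw [← S.arc_mul_arcProd hα a, ← mul_assoc, S.swap_mul_arc]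

theorem arc_mul_arcProd_of_ne {α : Perm X} (hα : Involutive α) (a : X) {b : X} (hb : α b ≠ b) :
    S.arc a b * S.arcProd hα = S.perm (swap a (α b)) * S.arcProd hα := by
  rw [← S.arc_mul_arcProd hα b, ← mul_assoc, S.arc_mul_arc a b _ hb.symm, mul_assoc]

/- Both `swap a c` and `swap (α a) (α c)` act on the idempotent as `arc a (α c)` does. -/
theorem swap_mul_swap_mul_arcProd {α : Perm X} (hα : Involutive α) {a c : X} (ha : α a ≠ a)
    (hc : α c ≠ c) : S.perm (swap a c * swap (α a) (α c)) * S.arcProd hα = S.arcProd hα := by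
  have hαc : S.arc a (α c) * S.arcProd hα = S.perm (swap a c) * S.arcProd hα := by
    rw [S.arc_mul_arcProd_of_ne hα a (α.injective.ne hc), hα c]
  have hαa : S.arc a (α c) * S.arcProd hα = S.perm (swap (α a) (α c)) * S.arcProd hα := by
    rw [S.arc_comm, S.arc_mul_arcProd_of_ne hα _ ha, swap_comm]
  rw [map_mul, mul_assoc, ← hαa, hαc, ← mul_assoc, ← map_mul, swap_mul_self, map_one, one_mul]

theorem perm_mul_arcProd {α : Perm X} (hα : Involutive α) {w : Perm X} (hw : w ∈ arcStabilizer α) :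
    S.perm w * S.arcProd hα = S.arcProd hα := by
  let _ : MulAction (Perm X) T := MulAction.compHom T S.perm
  exact arcStabilizer_le hα (K := MulAction.stabilizer (Perm X) (S.arcProd hα))
    (S.swap_mul_arcProd hα) (fun _ _ => S.swap_mul_swap_mul_arcProd hα) hw

theorem exists_arc_mul_arcProd_eq {α : Perm X} (hα : Involutive α) (a b : X) :
    ∃ (u β : Perm X) (hβ : Involutive β), S.arc a b * S.arcProd hα = S.perm u * S.arcProd hβ := by
  obtain rfl | hab := eq_or_ne a b
  · exact ⟨1, α, hα, by rw [S.arc_self, map_one]⟩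
  by_cases hb : α b = b
  · by_cases ha : α a = a
    · have hβ : Involutive (swap a b * α) := by
        intro x
        simp only [Perm.mul_apply, swap_apply_def]
        grind [hα x]
      exact ⟨1, _, hβ, by rw [S.arcProd_swap_mul hα ha hb hab, map_one, one_mul]⟩
    · exact ⟨swap b (α a), α, hα, by rw [S.arc_comm, S.arc_mul_arcProd_of_ne hα b ha]⟩
  · exact ⟨swap a (α b), α, hα, S.arc_mul_arcProd_of_ne hα a hb⟩

theorem exists_eq_perm_mul_arcProd
    (hS : Submonoid.closure (Set.range S.perm ∪ Set.range (uncurry S.arc)) = ⊤) (x : T) :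
    ∃ (u α : Perm X) (hα : Involutive α), x = S.perm u * S.arcProd hα := by
  have hx : x ∈ Submonoid.closure (Set.range S.perm ∪ Set.range (uncurry S.arc)) :=
    hS ▸ Submonoid.mem_top x
  induction hx using Submonoid.closure_induction_left with
  | one =>
    have hone : Involutive (1 : Perm X) := fun _ => rfl
    exact ⟨1, 1, hone, by rw [map_one, one_mul, S.arcProd_one hone]⟩
  | mul_left g hg y _ ih =>
    obtain ⟨u, α, hα, rfl⟩ := ih
    obtain ⟨w, rfl⟩ | ⟨⟨a, b⟩, rfl⟩ := hg
    · exact ⟨w * u, α, hα, by rw [map_mul, mul_assoc]⟩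
    · obtain ⟨v, β, hβ, h⟩ := S.exists_arc_mul_arcProd_eq hα (u.symm a) (u.symm b)
      have hconj := S.semiconjBy_arc u (u.symm a) (u.symm b)
      rw [apply_symm_apply, apply_symm_apply] at hconj
      refine ⟨u * v, β, hβ, ?_⟩
      rw [uncurry_apply_pair, ← mul_assoc, ← hconj.eq, mul_assoc, h, map_mul, mul_assoc]

theorem map_arcProd {E : Type*} [Monoid E] (R : BrauerSystem X E) {f : T →* E}
    (hf : ∀ a b, f (S.arc a b) = R.arc a b) {α : Perm X} (hα : Involutive α) :
    f (S.arcProd hα) = R.arcProd hα := by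
  rw [arcProd, Finset.map_noncommProd]
  exact Finset.noncommProd_congr rfl (fun x _ => hf x (α x)) _

/-- The normal forms `perm u * arcProd α`, parametrized so that equal ones are listed once
whenever `S` distinguishes as much as the Brauer monoid does. -/
def normalForm (p : Σ α : {α : Perm X // Involutive α}, Perm X ⧸ arcStabilizer α.1) : T :=
  Quotient.liftOn' p.2 (fun u => S.perm u * S.arcProd p.1.2) fun u v huv => by
    rw [QuotientGroup.leftRel_apply] at huv
    calc S.perm u * S.arcProd p.1.2
        = S.perm u * (S.perm (u⁻¹ * v) * S.arcProd p.1.2) := by rw [S.perm_mul_arcProd p.1.2 huv]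
      _ = S.perm v * S.arcProd p.1.2 := by rw [← mul_assoc, ← map_mul, mul_inv_cancel_left]

theorem surjective_normalForm
    (hS : Submonoid.closure (Set.range S.perm ∪ Set.range (uncurry S.arc)) = ⊤) :
    Surjective S.normalForm := fun x => by
  obtain ⟨u, α, hα, rfl⟩ := S.exists_eq_perm_mul_arcProd hS x
  exact ⟨⟨⟨α, hα⟩, (u : Perm X ⧸ arcStabilizer α)⟩, rfl⟩

theorem map_normalForm {E : Type*} [Monoid E] (R : BrauerSystem X E) {f : T →* E}
    (hperm : ∀ w, f (S.perm w) = R.perm w) (harc : ∀ a b, f (S.arc a b) = R.arc a b)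
    (p : Σ α : {α : Perm X // Involutive α}, Perm X ⧸ arcStabilizer α.1) :
    f (S.normalForm p) = R.normalForm p := by
  obtain ⟨α, q⟩ := p
  induction q using QuotientGroup.induction_on with
  | H u => exact (map_mul f _ _).trans (by rw [hperm, S.map_arcProd R harc]; rfl)

end BrauerSystem

/-! ### The action on perfect matchings -/

/-- A perfect matching of `Y`, given by the map sending each point to its partner. -/
@[ext]
structure PerfectMatching (Y : Type*) where
  partner : Y → Y
  involutive : Involutive partner
  partner_ne : ∀ x, partner x ≠ x

namespace PerfectMatching

variable {Y : Type*}

instance : MulAction (Perm Y) (PerfectMatching Y) where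
  smul w f :=
    { partner := fun x => w (f.partner (w.symm x))
      involutive := fun x => by simp [f.involutive _]
      partner_ne := fun x h => f.partner_ne (w.symm x) (w.eq_symm_apply.2 h) }
  one_smul _ := rfl
  mul_smul _ _ _ := rfl

theorem partner_smul (w : Perm Y) (f : PerfectMatching Y) (x : Y) :
    (w • f).partner x = w (f.partner (w.symm x)) := rfl

variable [DecidableEq Y]

/-- The matching obtained from `f` by pairing `a` with `b`, and the former partners of `a` and `b`
with each other. It is `f` itself if `a = b`. -/
def join (a b : Y) (f : PerfectMatching Y) : PerfectMatching Y := swap b (f.partner a) • f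

theorem partner_join (a b : Y) (f : PerfectMatching Y) (x : Y) :
    (join a b f).partner x = swap b (f.partner a) (f.partner (swap b (f.partner a) x)) := rfl

theorem join_self (a : Y) (f : PerfectMatching Y) : join a a f = f := by
  ext x
  simp only [partner_join, swap_apply_def]
  grind [f.involutive a, f.involutive x, f.partner_ne a]

theorem partner_join_of_ne {a b : Y} (hab : a ≠ b) (f : PerfectMatching Y) (x : Y) :
    (join a b f).partner x = if x = a then b else if x = b then a else
      if f.partner x = a then f.partner b else if f.partner x = b then f.partner a
      else f.partner x := by
  simp only [partner_join, swap_apply_def]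
  grind [f.involutive a, f.involutive b, f.involutive x, f.partner_ne a, f.partner_ne b]

theorem join_comm (a b : Y) (f : PerfectMatching Y) : join a b f = join b a f := by
  ext x
  obtain rfl | hab := eq_or_ne a b
  · rfl
  rw [partner_join_of_ne hab, partner_join_of_ne hab.symm]
  grind [f.involutive x]

theorem smul_join (w : Perm Y) (a b : Y) (f : PerfectMatching Y) :
    w • join a b f = join (w a) (w b) (w • f) := by
  rw [join, join, partner_smul, symm_apply_apply, ← mul_smul, ← mul_smul, mul_swap_eq_swap_mul]

theorem join_join_comm {a b c d : Y} (hac : a ≠ c) (had : a ≠ d) (hbc : b ≠ c) (hbd : b ≠ d)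
    (f : PerfectMatching Y) : join a b (join c d f) = join c d (join a b f) := by
  obtain rfl | hab := eq_or_ne a b
  · rw [join_self, join_self]
  obtain rfl | hcd := eq_or_ne c d
  · rw [join_self, join_self]
  ext x
  simp only [partner_join_of_ne hab, partner_join_of_ne hcd]
  grind (splits := 30) [f.involutive x, f.involutive a, f.involutive b, f.involutive c,
    f.involutive d]

theorem join_join_eq_smul (a : Y) {b c : Y} (hbc : b ≠ c) (f : PerfectMatching Y) :
    join a b (join b c f) = swap a c • join b c f := by
  rw [join_comm, join, partner_join_of_ne hbc, if_pos rfl]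

/-- The Brauer system of perfect matchings. -/
def system (Y : Type*) [DecidableEq Y] :
    BrauerSystem Y (Function.End (PerfectMatching Y)) where
  perm := MulAction.toEndHom
  arc := join
  arc_self a := funext (join_self a)
  arc_comm a b := funext (join_comm a b)
  semiconjBy_arc w a b := funext (smul_join w a b)
  commute_arc _ _ _ _ hac had hbc hbd := funext (join_join_comm hac had hbc hbd)
  arc_mul_arc a _ _ hbc := funext (join_join_eq_smul a hbc)

/-- The matching of `x` with its copy `x'`, for all `x : X`. -/
def identity (X : Type*) : PerfectMatching (X ⊕ X) where
  partner := Sum.swap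
  involutive := Sum.swap_swap
  partner_ne x := by cases x <;> simp

end PerfectMatching

namespace BrauerSystem

variable {X : Type*} [DecidableEq X]

/-- The restriction of a Brauer system on `X ⊕ Z` to the points of `X`. -/
def restrictInl {Z T : Type*} [DecidableEq Z] [Monoid T] (S : BrauerSystem (X ⊕ Z) T) :
    BrauerSystem X T where
  perm := S.perm.comp ((Perm.sumCongrHom X Z).comp (MonoidHom.inl _ _))
  arc a b := S.arc (Sum.inl a) (Sum.inl b)
  arc_self a := S.arc_self _
  arc_comm a b := S.arc_comm _ _
  semiconjBy_arc w a b := S.semiconjBy_arc _ _ _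
  commute_arc a b c d hac had hbc hbd := S.commute_arc _ _ _ _ (Sum.inl_injective.ne hac)
    (Sum.inl_injective.ne had) (Sum.inl_injective.ne hbc) (Sum.inl_injective.ne hbd)
  arc_mul_arc a b c hbc := by
    rw [S.arc_mul_arc _ _ _ (Sum.inl_injective.ne hbc), ← Perm.sumCongr_swap_one]
    rfl

/-- The action of the Brauer monoid on its diagrams, as perfect matchings of two copies of `X`. -/
def diagramSystem (X : Type*) [DecidableEq X] :
    BrauerSystem X (Function.End (PerfectMatching (X ⊕ X))) :=
  (PerfectMatching.system (X ⊕ X)).restrictInl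

/-- The partner map of the diagram of `arcProd α`. -/
def arcDiagram (α : Perm X) : X ⊕ X → X ⊕ X :=
  Sum.elim (fun x => if α x = x then Sum.inr x else Sum.inl (α x))
    (fun x => if α x = x then Sum.inl x else Sum.inr (α x))

theorem arcDiagram_separates {w α β : Perm X}
    (h : ∀ z, arcDiagram α (Sum.map w id z) = Sum.map w id (arcDiagram β z)) :
    α = β ∧ w ∈ arcStabilizer α := by
  have hinr (x : X) := h (Sum.inr x)
  simp only [arcDiagram, Sum.map_inr, id, Sum.elim_inr] at hinr
  obtain rfl : α = β := by
    ext x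
    have hx := hinr x
    split_ifs at hx with hα hβ hβ
    · rw [hα, hβ]
    · exact (Sum.inl_ne_inr hx).elim
    · exact (Sum.inr_ne_inl hx).elim
    · exact Sum.inr_injective hx
  have hfix (x : X) (hx : α x = x) : w x = x := by simpa [hx, eq_comm] using hinr x
  refine ⟨rfl, mem_arcStabilizer.2 ⟨fun x => ?_, hfix⟩⟩
  by_cases hx : α x = x
  · rw [hx, hfix x hx, hx]
  · have hinl := h (Sum.inl x)
    simp only [arcDiagram, Sum.map_inl, Sum.elim_inl, if_neg hx] at hinl
    split_ifs at hinl
    exact (Sum.inl_injective hinl).symm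

variable [Fintype X]

theorem partner_arcProd_identity {α : Perm X} (hα : Involutive α) :
    ((diagramSystem X).arcProd hα (PerfectMatching.identity X)).partner = arcDiagram α := by
  refine involutive_induction (motive := fun α => ∀ hα : Involutive α,
    ((diagramSystem X).arcProd hα (PerfectMatching.identity X)).partner = arcDiagram α) ?_ ?_ hα hα
  · intro h
    rw [arcProd_one]
    ext (x | x) <;> simp [arcDiagram, PerfectMatching.identity, Function.End.one_def]
  · intro α a b hα hab ha hb ih hβ
    rw [arcProd_swap_mul _ hα ha hb hab]
    ext z
    have hinl : (Sum.inl a : X ⊕ X) ≠ Sum.inl b := Sum.inl_injective.ne hab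
    refine (PerfectMatching.partner_join_of_ne hinl _ z).trans ?_
    have hαa (x : X) := ha ▸ α.injective.eq_iff (a := x) (b := a)
    have hαb (x : X) := hb ▸ α.injective.eq_iff (a := x) (b := b)
    rw [ih]
    obtain x | x := z <;>
      simp only [arcDiagram, Sum.elim_inl, Sum.elim_inr, Perm.mul_apply, swap_apply_def] <;>
      grind

theorem partner_perm_mul_arcProd_identity (u : Perm X) {α : Perm X} (hα : Involutive α)
    (z : X ⊕ X) :
    (((diagramSystem X).perm u * (diagramSystem X).arcProd hα)
        (PerfectMatching.identity X)).partner (Sum.map u id z) =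
      Sum.map u id (arcDiagram α z) := by
  rw [← partner_arcProd_identity hα]
  exact congrArg (fun y => Sum.map u id (PerfectMatching.partner _ y))
    ((Perm.sumCongr u 1).symm_apply_apply z)

theorem diagramSystem_separates {u v α β : Perm X} {hα : Involutive α} {hβ : Involutive β}
    (h : (diagramSystem X).perm u * (diagramSystem X).arcProd hα =
      (diagramSystem X).perm v * (diagramSystem X).arcProd hβ) :
    α = β ∧ u⁻¹ * v ∈ arcStabilizer α := by
  refine arcDiagram_separates fun z => ?_
  have hinj : Injective (Sum.map u id : X ⊕ X → X ⊕ X) := u.injective.sumMap injective_id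
  have hmap (z : X ⊕ X) : Sum.map u id (Sum.map (u⁻¹ * v) id z) = Sum.map v id z := by
    cases z <;> simp
  apply hinj
  rw [hmap, ← partner_perm_mul_arcProd_identity u hα, hmap, h,
    partner_perm_mul_arcProd_identity v hβ]

theorem injective_normalForm_diagramSystem : Injective (diagramSystem X).normalForm := by
  rintro ⟨⟨α, hα⟩, q⟩ ⟨⟨β, hβ⟩, r⟩ h
  induction q using QuotientGroup.induction_on with | H u => ?_
  induction r using QuotientGroup.induction_on with | H v => ?_
  obtain ⟨rfl, hmem⟩ := diagramSystem_separates h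
  rw [QuotientGroup.eq.2 hmem]

end BrauerSystem

/-! ### The Brauer system of the presented monoid -/

section Conjugation

variable {G T : Type*} [Group G] [Monoid T] (ι : G →* T)

theorem semiconjBy_map_inv {g : G} {x y : T} (h : SemiconjBy (ι g) x y) :
    SemiconjBy (ι g⁻¹) y x :=
  SemiconjBy.units_inv_symm_left (a := Units.map ι (toUnits g)) h

theorem eq_of_semiconjBy_map {g : G} {x x' y y' : T} (h : SemiconjBy (ι g) x y)
    (h' : SemiconjBy (ι g) x' y') (hx : x = x') : y = y' := by
  subst hx
  exact ((Group.isUnit g).map ι).mul_left_injective (h.eq.symm.trans h'.eq)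

theorem exists_semiconjBy_smul {X : Type*} [MulAction G X] [MulAction.IsPretransitive G X]
    (x₀ : X) (t : T) (ht : ∀ g : G, g • x₀ = x₀ → Commute (ι g) t) :
    ∃ f : X → T, f x₀ = t ∧ ∀ g x, SemiconjBy (ι g) (f x) (f (g • x)) := by
  choose γ hγ using MulAction.exists_smul_eq G x₀
  let f (x : X) : T := ι (γ x) * t * ι (γ x)⁻¹
  have hf (x : X) : SemiconjBy (ι (γ x)) t (f x) := by
    rw [SemiconjBy, mul_assoc _ _ (ι (γ x)), ← map_mul, inv_mul_cancel, map_one, mul_one]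
  refine ⟨f, eq_of_semiconjBy_map ι (hf x₀) (ht _ (hγ x₀)) rfl, fun g x => ?_⟩
  have hfix : ((γ (g • x))⁻¹ * g * γ x) • x₀ = x₀ := by
    rw [mul_smul, mul_smul, hγ, inv_smul_eq_iff, hγ]
  have hg : g = γ (g • x) * ((γ (g • x))⁻¹ * g * γ x) * (γ x)⁻¹ := by group
  have := ((hf (g • x)).mul_left (ht _ hfix)).mul_left (semiconjBy_map_inv ι (hf x))
  rwa [← map_mul, ← map_mul, ← hg] at this

end Conjugation

theorem exists_perm_map_eq {X : Type*} {l l' : List X} (hl : l.Nodup) (hl' : l'.Nodup)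
    (h : l.length = l'.length) : ∃ w : Perm X, l.map w = l' := by
  classical
  have := Perm.isMultiplyPretransitive X l.length
  obtain ⟨w, hw⟩ := MulAction.exists_smul_eq (Perm X)
    (⟨l.get, List.nodup_iff_injective_get.1 hl⟩ : Fin l.length ↪ X)
    ⟨l'.get ∘ Fin.cast h, (List.nodup_iff_injective_get.1 hl').comp (Fin.cast_injective h)⟩
  refine ⟨w, List.ext_get (by simpa using h) fun k hk _ => ?_⟩
  simpa using DFunLike.congr_fun hw ⟨k, by simpa using hk⟩

section AdjacentTranspositions

variable {n : ℕ}

theorem mem_orbit_closure_sPerm {k m : ℕ} {x : Fin n} (hx : k ≤ x.1) (hxm : x.1 ≤ m)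
    (hm : m < n) :
    (⟨m, hm⟩ : Fin n) ∈
      MulAction.orbit (Subgroup.closure (sPerm '' {i : Fin (n - 1) | k ≤ i.1})) x := by
  induction m, hxm using Nat.le_induction with
  | base => exact MulAction.mem_orbit_self x
  | succ m hxm ih =>
    let i : Fin (n - 1) := ⟨m, by omega⟩
    have hmem : sPerm i ∈ Subgroup.closure (sPerm '' {i : Fin (n - 1) | k ≤ i.1}) :=
      Subgroup.subset_closure ⟨i, hx.trans hxm, rfl⟩
    have hswap : (⟨sPerm i, hmem⟩ : Subgroup.closure _) • (⟨m, by omega⟩ : Fin n) = ⟨m + 1, hm⟩ :=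
      swap_apply_left _ _
    exact hswap ▸ MulAction.mem_orbit_of_mem_orbit _ (ih (by omega))

theorem mem_closure_sPerm {k : ℕ} {w : Perm (Fin n)} (hw : ∀ x : Fin n, x.1 < k → w x = x) :
    w ∈ Subgroup.closure (sPerm '' {i : Fin (n - 1) | k ≤ i.1}) := by
  have hswap : ∀ f ∈ sPerm '' {i : Fin (n - 1) | k ≤ i.1}, f.IsSwap := by
    rintro _ ⟨i, -, rfl⟩
    exact ⟨lo i, hi i, lo_ne_hi i, rfl⟩
  refine (mem_closure_isSwap hswap).2 ⟨Set.toFinite _, fun x => ?_⟩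
  obtain hx | hx := lt_or_ge x.1 k
  · rw [hw x hx]
    exact MulAction.mem_orbit_self x
  · have hwx : k ≤ (w x).1 := by
      by_contra! h
      rw [w.injective (hw _ h)] at h
      omega
    obtain hle | hle := le_total x.1 (w x).1
    · exact mem_orbit_closure_sPerm hx hle _
    · exact MulAction.mem_orbit_symm.1 (mem_orbit_closure_sPerm hwx hle _)

end AdjacentTranspositions

section Presentation

variable {n : ℕ}

theorem σB_mul_self (i : Fin (n - 1)) : σB i * σB i = 1 :=
  PresentedMonoid.mk_eq_mk_of_rel (.sigma_sq i)

theorem σB_mul_θB (i : Fin (n - 1)) : σB i * θB i = θB i :=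
  PresentedMonoid.mk_eq_mk_of_rel (.sigma_theta i)

theorem θB_mul_σB (i : Fin (n - 1)) : θB i * σB i = θB i :=
  PresentedMonoid.mk_eq_mk_of_rel (.theta_sigma i)

theorem θB_mul_self (i : Fin (n - 1)) : θB i * θB i = θB i :=
  PresentedMonoid.mk_eq_mk_of_rel (.theta_idem i)

theorem θB_mul_θB_mul_θB {i j : Fin (n - 1)} (h : Nat.dist i.1 j.1 = 1) :
    θB i * θB j * θB i = θB i :=
  PresentedMonoid.mk_eq_mk_of_rel (.theta_theta_theta i j h)

theorem commute_σB_θB {i j : Fin (n - 1)} (h : i.1 + 1 < j.1) : Commute (σB j) (θB i) :=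
  (PresentedMonoid.mk_eq_mk_of_rel
    (.theta_sigma_comm i j (by rw [Nat.dist_eq_sub_of_le] <;> omega))).symm

theorem commute_θB_θB {i j : Fin (n - 1)} (h : i.1 + 1 < j.1) : Commute (θB i) (θB j) :=
  PresentedMonoid.mk_eq_mk_of_rel (.theta_comm i j (by rw [Nat.dist_eq_sub_of_le] <;> omega))

theorem θB_mul_θB {i j : Fin (n - 1)} (h : Nat.dist i.1 j.1 = 1) :
    θB j * θB i = σB i * σB j * θB i := by
  have hrel : σB i * θB j * θB i = σB j * θB i :=
    PresentedMonoid.mk_eq_mk_of_rel (.sigma_theta_theta i j h)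
  rw [mul_assoc, ← hrel, ← mul_assoc, ← mul_assoc, σB_mul_self, one_mul]

theorem semiconjBy_σB_mul_σB {i j : Fin (n - 1)} (h : Nat.dist i.1 j.1 = 1) :
    SemiconjBy (σB i * σB j) (θB i) (θB j) := by
  have hrel : θB i * θB j * σB i = θB i * σB j :=
    PresentedMonoid.mk_eq_mk_of_rel (.theta_theta_sigma i j h)
  have hθ : θB i * θB j * (σB i * σB j) = θB i := by
    rw [← mul_assoc, hrel, mul_assoc, σB_mul_self, mul_one]
  calc σB i * σB j * θB i = θB j * θB i := (θB_mul_θB h).symm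
    _ = θB j * θB i * θB j * (σB i * σB j) := by
      rw [mul_assoc, mul_assoc, ← mul_assoc (θB i), hθ]
    _ = θB j * (σB i * σB j) := by rw [θB_mul_θB_mul_θB (by rwa [Nat.dist_comm])]

theorem isCoxeterFamily_σB : IsCoxeterFamily (σB (n := n)) where
  mul_self := σB_mul_self
  commute i j h := PresentedMonoid.mk_eq_mk_of_rel
    (.sigma_comm i j (by rw [Nat.dist_eq_sub_of_le] <;> omega))
  braid i j h := PresentedMonoid.mk_eq_mk_of_rel
    (.braid i j (by rw [Nat.dist_eq_sub_of_le] <;> omega))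

variable (n) in
/-- The homomorphism from the symmetric group with `s_i ↦ σ_i`. -/
noncomputable def brauerPerm : Perm (Fin n) →* BrauerMonoid n :=
  isCoxeterFamily_σB.exists_perm_hom.choose

theorem brauerPerm_sPerm (i : Fin (n - 1)) : brauerPerm n (sPerm i) = σB i :=
  isCoxeterFamily_σB.exists_perm_hom.choose_spec i

theorem commute_brauerPerm_θB {z : Fin (n - 1)} (hz : z.1 = 0) {w : Perm (Fin n)}
    (hlo : w (lo z) = lo z) (hhi : w (hi z) = hi z) : Commute (brauerPerm n w) (θB z) := by
  have hw : w ∈ Subgroup.closure (sPerm '' {i : Fin (n - 1) | 2 ≤ i.1}) := by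
    refine mem_closure_sPerm fun x hx => ?_
    obtain rfl | rfl : x = lo z ∨ x = hi z := by
      simp only [Fin.ext_iff, lo, hi]
      omega
    exacts [hlo, hhi]
  clear hlo hhi
  induction hw using Subgroup.closure_induction with
  | mem _ h =>
    obtain ⟨i, two_le, rfl⟩ := h
    rw [brauerPerm_sPerm]
    exact commute_σB_θB (by rw [hz]; exact two_le)
  | one => rw [map_one]; exact Commute.one_left _
  | mul u v _ _ hu hv => rw [map_mul]; exact SemiconjBy.mul_left hu hv
  | inv u _ hu => exact semiconjBy_map_inv _ hu

theorem exists_perm_semiconjBy_θB (z i : Fin (n - 1)) (hz : z.1 = 0) :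
    ∃ w : Perm (Fin n), w (lo z) = lo i ∧ w (hi z) = hi i ∧
      SemiconjBy (brauerPerm n w) (θB z) (θB i) := by
  obtain ⟨k, hk⟩ := i
  induction k with
  | zero =>
    obtain rfl : z = ⟨0, hk⟩ := Fin.ext hz
    exact ⟨1, rfl, rfl, by rw [map_one]; exact SemiconjBy.one_left _⟩
  | succ k ih =>
    let i : Fin (n - 1) := ⟨k, by omega⟩
    let j : Fin (n - 1) := ⟨k + 1, hk⟩
    obtain ⟨w, hlo, hhi, hw⟩ := ih (by omega)
    have hij : hi i = lo j := hi_eq_lo rfl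
    have hne : lo i ≠ hi j := lo_ne_hi_of_le (Nat.le_succ k)
    refine ⟨sPerm i * sPerm j * w, ?_, ?_, ?_⟩
    · rw [Perm.mul_apply, hlo, Perm.mul_apply, sPerm, sPerm,
        swap_apply_of_ne_of_ne (hij ▸ lo_ne_hi i) hne, swap_apply_left, hij]
    · rw [Perm.mul_apply, hhi, Perm.mul_apply, sPerm, sPerm, hij, swap_apply_left,
        swap_apply_of_ne_of_ne hne.symm (lo_ne_hi j).symm]
    · rw [map_mul, map_mul, brauerPerm_sPerm, brauerPerm_sPerm]
      exact (semiconjBy_σB_mul_σB (by simp [i, j, Nat.dist])).mul_left hw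

theorem smul_embFinTwo {X : Type*} (w : Perm X) {a b : X} (h : a ≠ b) :
    w • Embedding.embFinTwo h = Embedding.embFinTwo (w.injective.ne h) :=
  DFunLike.ext _ _ (Fin.forall_fin_two.2 ⟨rfl, rfl⟩)

theorem exists_brauerArc : ∃ arc : Fin n → Fin n → BrauerMonoid n,
    (∀ a, arc a a = 1) ∧ (∀ i, arc (lo i) (hi i) = θB i) ∧
      ∀ w a b, SemiconjBy (brauerPerm n w) (arc a b) (arc (w a) (w b)) := by
  obtain hn | hn := Nat.eq_zero_or_pos (n - 1)
  · exact ⟨fun _ _ => 1, fun _ => rfl, fun i => (hn ▸ i).elim0, fun _ _ _ => SemiconjBy.one_right _⟩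
  let z : Fin (n - 1) := ⟨0, hn⟩
  have := Perm.isMultiplyPretransitive (Fin n) 2
  obtain ⟨f, hfz, hf⟩ := exists_semiconjBy_smul (brauerPerm n)
    (Embedding.embFinTwo (lo_ne_hi z)) (θB z) fun w hw =>
      commute_brauerPerm_θB rfl (DFunLike.congr_fun hw 0) (DFunLike.congr_fun hw 1)
  refine ⟨fun a b => if h : a = b then 1 else f (Embedding.embFinTwo h), fun a => dif_pos rfl,
    fun i => ?_, fun w a b => ?_⟩
  · obtain ⟨w, hlo, hhi, hw⟩ := exists_perm_semiconjBy_θB z i rfl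
    have hfw := hf w (Embedding.embFinTwo (lo_ne_hi z))
    rw [hfz, smul_embFinTwo] at hfw
    simp only [hlo, hhi] at hfw
    refine (dif_neg (lo_ne_hi i)).trans ?_
    exact eq_of_semiconjBy_map _ hfw hw rfl
  · obtain rfl | hab := eq_or_ne a b
    · simp only [dite_true]
      exact SemiconjBy.one_right _
    · simp only [dif_neg hab, dif_neg (w.injective.ne hab)]
      exact smul_embFinTwo w hab ▸ hf w _

/-- The conjugates of the `θ_i` under the symmetric group, indexed by their arcs. -/
noncomputable def brauerArc : Fin n → Fin n → BrauerMonoid n := exists_brauerArc.choose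

theorem brauerArc_self (a : Fin n) : brauerArc a a = 1 := exists_brauerArc.choose_spec.1 a

theorem brauerArc_lo_hi (i : Fin (n - 1)) : brauerArc (lo i) (hi i) = θB i :=
  exists_brauerArc.choose_spec.2.1 i

theorem semiconjBy_brauerArc (w : Perm (Fin n)) (a b : Fin n) :
    SemiconjBy (brauerPerm n w) (brauerArc a b) (brauerArc (w a) (w b)) :=
  exists_brauerArc.choose_spec.2.2 w a b

theorem semiconjBy_brauerPerm_swap (w : Perm (Fin n)) (a b : Fin n) :
    SemiconjBy (brauerPerm n w) (brauerPerm n (swap a b)) (brauerPerm n (swap (w a) (w b))) :=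
  SemiconjBy.map (mul_swap_eq_swap_mul w a b) (brauerPerm n)

theorem exists_perm_lo_hi {a b : Fin n} (hab : a ≠ b) :
    ∃ (w : Perm (Fin n)) (i : Fin (n - 1)), w (lo i) = a ∧ w (hi i) = b := by
  let i : Fin (n - 1) := ⟨0, by omega⟩
  obtain ⟨w, hw⟩ := exists_perm_map_eq (l := [lo i, hi i]) (l' := [a, b])
    (by simp [lo_ne_hi]) (by simp [hab]) rfl
  exact ⟨w, i, by simpa using hw⟩

theorem exists_perm_lo_hi_hi {a b c : Fin n} (h : [a, b, c].Nodup) :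
    ∃ (w : Perm (Fin n)) (i j : Fin (n - 1)), i.1 + 1 = j.1 ∧
      w (lo i) = a ∧ w (hi i) = b ∧ w (hi j) = c := by
  have hn := h.length_le_card
  simp only [List.length_cons, List.length_nil, Fintype.card_fin] at hn
  let i : Fin (n - 1) := ⟨0, by omega⟩
  let j : Fin (n - 1) := ⟨1, by omega⟩
  obtain ⟨w, hw⟩ := exists_perm_map_eq (l := [lo i, hi i, hi j]) (by simp [lo, hi, i, j]) h rfl
  exact ⟨w, i, j, rfl, by simpa using hw⟩

theorem exists_perm_lo_hi_lo_hi {a b c d : Fin n} (h : [a, b, c, d].Nodup) :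
    ∃ (w : Perm (Fin n)) (i j : Fin (n - 1)), i.1 + 1 < j.1 ∧
      w (lo i) = a ∧ w (hi i) = b ∧ w (lo j) = c ∧ w (hi j) = d := by
  have hn := h.length_le_card
  simp only [List.length_cons, List.length_nil, Fintype.card_fin] at hn
  let i : Fin (n - 1) := ⟨0, by omega⟩
  let j : Fin (n - 1) := ⟨2, by omega⟩
  obtain ⟨w, hw⟩ := exists_perm_map_eq (l := [lo i, hi i, lo j, hi j])
    (by simp [lo, hi, i, j]) h rfl
  exact ⟨w, i, j, Nat.one_lt_two, by simpa using hw⟩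

theorem brauerArc_comm (a b : Fin n) : brauerArc a b = brauerArc b a := by
  obtain rfl | hab := eq_or_ne a b
  · rfl
  obtain ⟨w, i, rfl, rfl⟩ := exists_perm_lo_hi hab
  have hconj := semiconjBy_brauerArc (sPerm i) (lo i) (hi i)
  rw [sPerm, swap_apply_left, swap_apply_right, ← sPerm, brauerArc_lo_hi] at hconj
  have hcomm : Commute (brauerPerm n (sPerm i)) (θB i) := by
    rw [brauerPerm_sPerm, Commute, SemiconjBy, σB_mul_θB, θB_mul_σB]
  have hhi : brauerArc (hi i) (lo i) = θB i := eq_of_semiconjBy_map _ hconj hcomm rfl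
  exact eq_of_semiconjBy_map _ (semiconjBy_brauerArc w _ _) (semiconjBy_brauerArc w _ _)
    ((brauerArc_lo_hi i).trans hhi.symm)

theorem swap_mul_brauerArc {a b : Fin n} (hab : a ≠ b) :
    brauerPerm n (swap a b) * brauerArc a b = brauerArc a b := by
  obtain ⟨w, i, rfl, rfl⟩ := exists_perm_lo_hi hab
  have hw := semiconjBy_brauerArc w (lo i) (hi i)
  refine eq_of_semiconjBy_map _ ((semiconjBy_brauerPerm_swap w _ _).mul_right hw) hw ?_
  rw [← sPerm, brauerPerm_sPerm, brauerArc_lo_hi, σB_mul_θB]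

theorem brauerArc_mul_self {a b : Fin n} (hab : a ≠ b) :
    brauerArc a b * brauerArc a b = brauerArc a b := by
  obtain ⟨w, i, rfl, rfl⟩ := exists_perm_lo_hi hab
  have hw := semiconjBy_brauerArc w (lo i) (hi i)
  refine eq_of_semiconjBy_map _ (hw.mul_right hw) hw ?_
  rw [brauerArc_lo_hi, θB_mul_self]

theorem commute_brauerArc {a b c d : Fin n} (hac : a ≠ c) (had : a ≠ d) (hbc : b ≠ c)
    (hbd : b ≠ d) : Commute (brauerArc a b) (brauerArc c d) := by
  obtain rfl | hab := eq_or_ne a b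
  · rw [brauerArc_self]
    exact Commute.one_left _
  obtain rfl | hcd := eq_or_ne c d
  · rw [brauerArc_self]
    exact Commute.one_right _
  obtain ⟨w, i, j, hij, rfl, rfl, rfl, rfl⟩ :=
    exists_perm_lo_hi_lo_hi (a := a) (b := b) (c := c) (d := d) (by simp [*])
  have hw₁ := semiconjBy_brauerArc w (lo i) (hi i)
  have hw₂ := semiconjBy_brauerArc w (lo j) (hi j)
  refine eq_of_semiconjBy_map _ (hw₁.mul_right hw₂) (hw₂.mul_right hw₁) ?_
  rw [brauerArc_lo_hi, brauerArc_lo_hi, (commute_θB_θB hij).eq]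

theorem brauerArc_mul_brauerArc_of_ne {a b c : Fin n} (hab : a ≠ b) (hbc : b ≠ c) (hac : a ≠ c) :
    brauerArc a b * brauerArc b c = brauerPerm n (swap a c) * brauerArc b c := by
  obtain ⟨w, i, j, hij, rfl, rfl, rfl⟩ :=
    exists_perm_lo_hi_hi (a := a) (b := b) (c := c) (by simp [*])
  have hw := semiconjBy_brauerArc w (hi i) (hi j)
  refine eq_of_semiconjBy_map _ ((semiconjBy_brauerArc w _ _).mul_right hw)
    ((semiconjBy_brauerPerm_swap w _ _).mul_right hw) ?_
  have hswap : swap (lo i) (hi j) = sPerm j * sPerm i * sPerm j := by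
    rw [sPerm, sPerm, hi_eq_lo hij, swap_mul_swap_mul_swap (hi_eq_lo hij ▸ lo_ne_hi i)
      (lo_ne_hi_of_le (by omega)), swap_comm]
  rw [hswap, map_mul, map_mul, brauerPerm_sPerm, brauerPerm_sPerm, brauerArc_lo_hi,
    hi_eq_lo hij, brauerArc_lo_hi, mul_assoc, σB_mul_θB, θB_mul_θB]
  rw [Nat.dist_comm, Nat.dist_eq_sub_of_le] <;> omega

/-- The presented monoid as a Brauer system on `{1, …, n}`. -/
noncomputable def brauerSystem (n : ℕ) : BrauerSystem (Fin n) (BrauerMonoid n) where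
  perm := brauerPerm n
  arc := brauerArc
  arc_self := brauerArc_self
  arc_comm := brauerArc_comm
  semiconjBy_arc := semiconjBy_brauerArc
  commute_arc _ _ _ _ := commute_brauerArc
  arc_mul_arc a b c hbc := by
    obtain rfl | hab := eq_or_ne a b
    · rw [brauerArc_self, one_mul, swap_mul_brauerArc hbc]
    obtain rfl | hac := eq_or_ne a c
    · rw [brauerArc_comm a b, brauerArc_mul_self hbc, swap_self, ← Perm.one_def, map_one, one_mul]
    · exact brauerArc_mul_brauerArc_of_ne hab hbc hac

theorem closure_brauerSystem :
    Submonoid.closure (Set.range (brauerSystem n).perm ∪ Set.range (uncurry (brauerSystem n).arc)) =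
      ⊤ := by
  rw [eq_top_iff, ← PresentedMonoid.closure_range_of (BrauerRel n)]
  refine Submonoid.closure_mono ?_
  rintro _ ⟨i | i, rfl⟩
  · exact .inl ⟨sPerm i, brauerPerm_sPerm i⟩
  · exact .inr ⟨(lo i, hi i), brauerArc_lo_hi i⟩

end Presentation

/-! ### The universal property of the presented monoid -/

namespace BrauerSystem

section Relations

variable {X : Type*} [DecidableEq X] {E : Type*} [Monoid E] (S : BrauerSystem X E)

theorem arc_mul_swap (a b : X) : S.arc a b * S.perm (swap a b) = S.arc a b := by
  have hconj := (S.semiconjBy_arc (swap a b) a b).eq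
  rw [swap_apply_left, swap_apply_right, S.swap_mul_arc, S.arc_comm b a] at hconj
  exact hconj.symm

theorem arc_mul_arc_eq_arc_mul_swap {a b c : X} (hab : a ≠ b) (hbc : b ≠ c) :
    S.arc a b * S.arc b c = S.arc a b * S.perm (swap a c) := by
  have hconj := (S.semiconjBy_arc (swap a c) b c).eq
  rw [swap_apply_of_ne_of_ne hab.symm hbc, swap_apply_right] at hconj
  rw [S.arc_mul_arc a b c hbc, hconj, S.arc_comm b a]

theorem arc_mul_arc_mul_arc {a b c : X} (hab : a ≠ b) (hbc : b ≠ c) :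
    S.arc a b * S.arc b c * S.arc a b = S.arc a b := by
  have hconj := (S.semiconjBy_arc (swap a c) a b).eq
  rw [swap_apply_left, swap_apply_of_ne_of_ne hab.symm hbc, S.arc_comm c b] at hconj
  rw [S.arc_mul_arc_eq_arc_mul_swap hab hbc, mul_assoc, hconj, ← mul_assoc,
    S.arc_mul_arc_eq_arc_mul_swap hab hbc, mul_assoc, ← map_mul, swap_mul_self, map_one, mul_one]

theorem swap_mul_arc_mul_arc {a b c : X} (hab : a ≠ b) (hbc : b ≠ c) (hac : a ≠ c) :
    S.perm (swap a b) * S.arc b c * S.arc a b = S.perm (swap b c) * S.arc a b := by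
  rw [mul_assoc, S.arc_comm b c, S.arc_comm a b, S.arc_mul_arc c b a hab.symm, ← mul_assoc,
    ← map_mul, mul_swap_eq_swap_mul, swap_apply_left, swap_apply_of_ne_of_ne hac.symm hbc.symm,
    map_mul, mul_assoc, swap_comm a b, S.swap_mul_arc, swap_comm]

theorem arc_mul_arc_mul_swap {a b c : X} (hab : a ≠ b) (hbc : b ≠ c) (hac : a ≠ c) :
    S.arc a b * S.arc b c * S.perm (swap a b) = S.arc a b * S.perm (swap b c) := by
  have hswap : swap a c * swap a b = swap a b * swap b c := by
    rw [mul_swap_eq_swap_mul (swap a b), swap_apply_right,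
      swap_apply_of_ne_of_ne hac.symm hbc.symm]
  rw [S.arc_mul_arc_eq_arc_mul_swap hab hbc, mul_assoc, ← map_mul, hswap, map_mul, ← mul_assoc,
    S.arc_mul_swap]

end Relations

variable {n : ℕ} {E : Type*} [Monoid E] (S : BrauerSystem (Fin n) E)

theorem exists_arcs_of_dist_eq_one {i j : Fin (n - 1)} (h : Nat.dist i.1 j.1 = 1) :
    ∃ a b c : Fin n, a ≠ b ∧ b ≠ c ∧ a ≠ c ∧ sPerm i = swap a b ∧ sPerm j = swap b c ∧
      S.arc (lo i) (hi i) = S.arc a b ∧ S.arc (lo j) (hi j) = S.arc b c := by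
  obtain hij | hji : i.1 + 1 = j.1 ∨ j.1 + 1 = i.1 := by
    rw [Nat.dist] at h
    omega
  · have hlo := hi_eq_lo hij
    exact ⟨lo i, hi i, hi j, lo_ne_hi i, hlo ▸ lo_ne_hi j, lo_ne_hi_of_le (by omega), rfl,
      by rw [hlo, sPerm], rfl, by rw [hlo]⟩
  · have hlo := hi_eq_lo hji
    exact ⟨hi i, lo i, lo j, (lo_ne_hi i).symm, hlo ▸ (lo_ne_hi j).symm,
      (lo_ne_hi_of_le (by omega)).symm, swap_comm _ _, by rw [← hlo, sPerm, swap_comm],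
      S.arc_comm _ _, by rw [← hlo, S.arc_comm]⟩

/-- The images of the generators of the presented monoid in a Brauer system. -/
def generator : BrauerGen n → E :=
  Sum.elim (fun i => S.perm (sPerm i)) (fun i => S.arc (lo i) (hi i))

theorem lift_fσ (i : Fin (n - 1)) : FreeMonoid.lift S.generator (fσ i) = S.perm (sPerm i) := rfl

theorem lift_fθ (i : Fin (n - 1)) : FreeMonoid.lift S.generator (fθ i) = S.arc (lo i) (hi i) := rfl

theorem lift_generator_eq_of_brauerRel {u v : FreeMonoid (BrauerGen n)} (h : BrauerRel n u v) :
    FreeMonoid.lift S.generator u = FreeMonoid.lift S.generator v := by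
  induction h <;> simp only [map_mul, map_one, lift_fσ, lift_fθ]
  case sigma_sq i => rw [← map_mul, sPerm, swap_mul_self, map_one]
  case sigma_comm i j h =>
    obtain ⟨h₁, h₂, h₃, h₄⟩ := ends_ne_of_one_lt_dist h
    exact (swap_commute_swap h₁ h₂ h₃ h₄).map S.perm
  case braid i j h =>
    obtain ⟨a, b, c, hab, hbc, hac, hsi, hsj, -, -⟩ := S.exists_arcs_of_dist_eq_one h
    simp only [hsi, hsj, ← map_mul, swap_mul_swap_mul_swap_comm hab hbc hac]
  case theta_idem i => exact S.arc_mul_self _ _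
  case theta_comm i j h =>
    obtain ⟨h₁, h₂, h₃, h₄⟩ := ends_ne_of_one_lt_dist h
    exact S.commute_arc _ _ _ _ h₁ h₂ h₃ h₄
  case theta_theta_theta i j h =>
    obtain ⟨a, b, c, hab, hbc, -, -, -, hai, haj⟩ := S.exists_arcs_of_dist_eq_one h
    rw [hai, haj, S.arc_mul_arc_mul_arc hab hbc]
  case theta_sigma i => exact S.arc_mul_swap _ _
  case sigma_theta i => exact S.swap_mul_arc _ _
  case theta_sigma_comm i j h =>
    obtain ⟨h₁, h₂, h₃, h₄⟩ := ends_ne_of_one_lt_dist h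
    have hconj := (S.semiconjBy_arc (sPerm j) (lo i) (hi i)).eq
    rw [sPerm, swap_apply_of_ne_of_ne h₁ h₂, swap_apply_of_ne_of_ne h₃ h₄] at hconj
    exact hconj.symm
  case sigma_theta_theta i j h =>
    obtain ⟨a, b, c, hab, hbc, hac, hsi, hsj, hai, haj⟩ := S.exists_arcs_of_dist_eq_one h
    rw [hsi, hsj, hai, haj, S.swap_mul_arc_mul_arc hab hbc hac]
  case theta_theta_sigma i j h =>
    obtain ⟨a, b, c, hab, hbc, hac, hsi, hsj, hai, haj⟩ := S.exists_arcs_of_dist_eq_one h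
    rw [hsi, hsj, hai, haj, S.arc_mul_arc_mul_swap hab hbc hac]

/-- The homomorphism from the presented monoid to any Brauer system on `{1, …, n}`. -/
def lift : BrauerMonoid n →* E :=
  PresentedMonoid.lift S.generator fun _ _ => S.lift_generator_eq_of_brauerRel

theorem lift_brauerPerm (w : Perm (Fin n)) : S.lift (brauerPerm n w) = S.perm w := by
  suffices h : S.lift.comp (brauerPerm n) = S.perm from DFunLike.congr_fun h w
  refine MonoidHom.eq_of_eqOn_denseM closure_range_sPerm ?_
  rintro _ ⟨i, rfl⟩
  rw [MonoidHom.comp_apply, brauerPerm_sPerm]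
  rfl

theorem lift_brauerArc (a b : Fin n) : S.lift (brauerArc a b) = S.arc a b := by
  obtain rfl | hab := eq_or_ne a b
  · rw [brauerArc_self, S.arc_self, map_one]
  obtain ⟨w, i, rfl, rfl⟩ := exists_perm_lo_hi hab
  have hconj := (semiconjBy_brauerArc w (lo i) (hi i)).map S.lift
  rw [S.lift_brauerPerm, brauerArc_lo_hi] at hconj
  exact eq_of_semiconjBy_map _ hconj (S.semiconjBy_arc w _ _) rfl

end BrauerSystem

theorem bijective_normalForm_brauerSystem (n : ℕ) : Bijective (brauerSystem n).normalForm := by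
  refine ⟨?_, (brauerSystem n).surjective_normalForm closure_brauerSystem⟩
  let D := BrauerSystem.diagramSystem (Fin n)
  have hlift : D.lift ∘ (brauerSystem n).normalForm = D.normalForm :=
    funext ((brauerSystem n).map_normalForm D D.lift_brauerPerm D.lift_brauerArc)
  exact Injective.of_comp (hlift ▸ BrauerSystem.injective_normalForm_diagramSystem)

/-- Theorem 1 of Kudryavtseva–Mazorchuk, in cardinality form: the monoid `T` is finite and
`|T| = Σ_{k=0}^{⌊n/2⌋} (n!)² / (2^{2k} (k!)² (n-2k)!)`, the cardinality of the Brauer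
monoid `𝔅_n` (to which `T` is isomorphic via `σ_i ↦ s_i`, `θ_i ↦ π_i`). -/
theorem brauer_card_eq (n : ℕ) (hn : 1 ≤ n) :
    Finite (BrauerMonoid n) ∧
      Nat.card (BrauerMonoid n) =
        ∑ k ∈ Finset.range (n / 2 + 1),
          n.factorial ^ 2 / (2 ^ (2 * k) * k.factorial ^ 2 * (n - 2 * k).factorial) := by
  let e := Equiv.ofBijective _ (bijective_normalForm_brauerSystem n)
  exact ⟨Finite.of_equiv _ e,
    by rw [← Nat.card_congr e, card_sigma_quotient_arcStabilizer, Fintype.card_fin]⟩
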